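/- Let F be a union-closed family on n elements with m sets and suppose H(F) = 2. Then every element x ∈ {1, …, n} belongs to at least m − 1 of the sets of F, and there exists an element x ∈ {1, …, n} that belongs to more than m/2 of the sets of F. -/

import Mathlib

open Finset

/-- The minimal members of a family of finite sets: those `A` such that no
member `B ≠ A` satisfies `B ⊆ A`. -/
def minimalSets (G : Finset (Finset ℕ)) : Finset (Finset ℕ) :=
  G.filter fun A => ∀ B ∈ G, B ≠ A → ¬ B ⊆ A

/-- The family remaining after removing the first `i` layers of the height
decomposition. -/
def rest (F : Finset (Finset ℕ)) : ℕ → Finset (Finset ℕ)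
  | 0 => F
  | i + 1 => rest F i \ minimalSets (rest F i)

/-- The `i`-th layer `π_i` of the height decomposition (meaningful for `i ≥ 1`):
`π_{i+1}` is the family of minimal members of `F \ (π₁ ∪ ⋯ ∪ π_i)`. -/
def layer (F : Finset (Finset ℕ)) : ℕ → Finset (Finset ℕ)
  | 0 => ∅
  | i + 1 => minimalSets (rest F i)

/-- The height number `H(F)`: the least `H` with `F = π₁ ∪ ⋯ ∪ π_H`,
equivalently the least `H` with `rest F H = ∅`. -/
noncomputable def height (F : Finset (Finset ℕ)) : ℕ :=
  sInf {H : ℕ | rest F H = ∅}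

/-- `F` is a union-closed family on `n` elements with `m` sets: a finite family
of `m` distinct nonempty finite sets whose union is `{1, …, n}`, closed under
unions. -/
def IsUC (F : Finset (Finset ℕ)) (n m : ℕ) : Prop :=
  F.Nonempty ∧ F.card = m ∧ (∀ A ∈ F, A.Nonempty) ∧
    F.sup id = Finset.Icc 1 n ∧ ∀ A ∈ F, ∀ B ∈ F, A ∪ B ∈ F

/-- The tent `T(A)` of a set `A` of level `i ≥ 2`: the family
`{A} ∪ {B ∈ π_{i−1} : B ⊆ A}`. -/
def tent (F : Finset (Finset ℕ)) (i : ℕ) (A : Finset ℕ) : Finset (Finset ℕ) :=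
  insert A ((layer F (i - 1)).filter fun B => B ⊆ A)

/-- `F` is separating: every pair of distinct elements of `{1, …, n}` is
separated by some member of `F`. -/
def Separating (F : Finset (Finset ℕ)) (n : ℕ) : Prop :=
  ∀ x ∈ Finset.Icc 1 n, ∀ y ∈ Finset.Icc 1 n, x ≠ y →
    ∃ A ∈ F, (x ∈ A ∧ y ∉ A) ∨ (y ∈ A ∧ x ∉ A)

/-!
A union-closed antichain has at most one member, since the union of two distinct members strictly
contains one of them. The members of `F` avoiding a given `x` form a union-closed family, and each
is strictly contained in `⋃ F`, itself a member of `F`, so that family has smaller height than `F`.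
When `H(F) = 2` it is therefore an antichain, hence at most one set avoids `x`. Choosing `x` in the
smaller of two nested members gives frequency at least `max 2 (m - 1)`, which exceeds `m / 2`.
-/

theorem subsingleton_of_supClosed_of_isAntichain {α : Type*} [SemilatticeSup α] {s : Set α}
    (hsup : SupClosed s) (hs : IsAntichain (· ≤ ·) s) : s.Subsingleton := by
  intro a ha b hb
  have hab : a ⊔ b ∈ s := hsup ha hb
  exact (hs.eq ha hab le_sup_left).trans (hs.eq hb hab le_sup_right).symm

theorem supClosed_filter_notMem {α : Type*} [DecidableEq α] {F : Finset (Finset α)}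
    (hF : SupClosed (F : Set (Finset α))) (x : α) :
    SupClosed (({A ∈ F | x ∉ A} : Finset (Finset α)) : Set (Finset α)) := by
  intro A hA B hB
  simp only [mem_coe, mem_filter] at hA hB ⊢
  exact ⟨hF hA.1 hB.1, notMem_union.mpr ⟨hA.2, hB.2⟩⟩

section Layers

variable {F G : Finset (Finset ℕ)} {A B : Finset ℕ} {i : ℕ}

theorem mem_rest_succ : A ∈ rest F (i + 1) ↔ A ∈ rest F i ∧ ∃ B ∈ rest F i, B ⊂ A := by
  simp only [rest, minimalSets, mem_sdiff, mem_filter, ssubset_iff_subset_ne]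
  grind

theorem rest_antitone (F : Finset (Finset ℕ)) : Antitone (rest F) :=
  antitone_nat_of_succ_le fun _ => sdiff_subset

theorem mem_rest_of_subset (hA : A ∈ rest F i) (hB : B ∈ F) (hAB : A ⊆ B) : B ∈ rest F i := by
  induction i generalizing A B with
  | zero => exact hB
  | succ i ih =>
    obtain ⟨hA, C, hC, hCA⟩ := mem_rest_succ.mp hA
    exact mem_rest_succ.mpr ⟨ih hA hB hAB, C, hC, hCA.trans_subset hAB⟩

theorem mem_rest_succ_iff_exists_ssubset :
    A ∈ rest F (i + 1) ↔ A ∈ F ∧ ∃ B ∈ rest F i, B ⊂ A := by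
  rw [mem_rest_succ]
  refine and_congr_left fun ⟨B, hB, hBA⟩ => ⟨fun hA => rest_antitone F i.zero_le hA, fun hA => ?_⟩
  exact mem_rest_of_subset hB hA hBA.subset

theorem rest_mono (hGF : G ⊆ F) (i : ℕ) : rest G i ⊆ rest F i := by
  induction i with
  | zero => exact hGF
  | succ i ih =>
    intro A hA
    obtain ⟨hA, B, hB, hBA⟩ := mem_rest_succ_iff_exists_ssubset.mp hA
    exact mem_rest_succ_iff_exists_ssubset.mpr ⟨hGF hA, B, ih hB, hBA⟩

theorem le_card_of_mem_rest (hA : A ∈ rest F i) : i ≤ #A := by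
  induction i generalizing A with
  | zero => exact Nat.zero_le _
  | succ i ih =>
    obtain ⟨-, B, hB, hBA⟩ := mem_rest_succ_iff_exists_ssubset.mp hA
    exact (ih hB).trans_lt (card_lt_card hBA)

theorem exists_rest_eq_empty (F : Finset (Finset ℕ)) : ∃ i, rest F i = ∅ := by
  refine ⟨F.sup card + 1, eq_empty_of_forall_notMem fun A hA => ?_⟩
  have hcard : #A ≤ F.sup card := le_sup (rest_antitone F (Nat.zero_le _) hA)
  exact (le_card_of_mem_rest hA).not_gt (Nat.lt_succ_of_le hcard)

theorem height_le_iff : height F ≤ i ↔ rest F i = ∅ := by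
  refine ⟨fun h => ?_, fun h => Nat.sInf_le h⟩
  have hrest : rest F (height F) = ∅ := Nat.sInf_mem (exists_rest_eq_empty F)
  exact subset_empty.mp (hrest ▸ rest_antitone F h)

theorem isAntichain_of_height_le_one (h : height F ≤ 1) :
    IsAntichain (· ≤ ·) (F : Set (Finset ℕ)) := by
  intro A hA B hB hne hAB
  have hB_rest : B ∈ rest F 1 :=
    mem_rest_succ_iff_exists_ssubset.mpr ⟨hB, A, hA, hAB.ssubset_of_ne hne⟩
  exact notMem_empty B (height_le_iff.mp h ▸ hB_rest)

theorem height_lt_height_of_forall_ssubset (hGF : G ⊆ F) (hA : A ∈ F) (hGA : ∀ B ∈ G, B ⊂ A) :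
    height G < height F := by
  cases hF : height F with
  | zero => exact absurd (height_le_iff.mp hF.le) (ne_empty_of_mem hA)
  | succ k =>
    refine Nat.lt_succ_of_le (height_le_iff.mpr (eq_empty_of_forall_notMem fun B hB => ?_))
    have hBA : B ⊂ A := hGA B (rest_antitone G k.zero_le hB)
    have hA_rest : A ∈ rest F (k + 1) :=
      mem_rest_succ_iff_exists_ssubset.mpr ⟨hA, B, rest_mono hGF k hB, hBA⟩
    exact notMem_empty A (height_le_iff.mp hF.le ▸ hA_rest)

theorem exists_ssubset_of_one_lt_height (h : 1 < height F) : ∃ A ∈ F, ∃ B ∈ F, A ⊂ B := by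
  have hrest : rest F 1 ≠ ∅ := fun he => (height_le_iff.mpr he).not_gt h
  obtain ⟨B, hB⟩ := nonempty_iff_ne_empty.mpr hrest
  obtain ⟨hB, A, hA, hAB⟩ := mem_rest_succ_iff_exists_ssubset.mp hB
  exact ⟨A, hA, B, hB, hAB⟩

end Layers

section Frequency

variable {F : Finset (Finset ℕ)} {x : ℕ}

theorem height_filter_notMem_lt (hF : SupClosed (F : Set (Finset ℕ))) (hx : x ∈ F.sup id) :
    height {A ∈ F | x ∉ A} < height F := by
  obtain ⟨B, hB, -⟩ := mem_sup.mp hx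
  have hU : F.sup id ∈ F := hF.finsetSup_mem ⟨B, hB⟩ fun _ hA => hA
  refine height_lt_height_of_forall_ssubset (filter_subset _ F) hU fun A hA => ?_
  obtain ⟨hA, hxA⟩ := mem_filter.mp hA
  exact (le_sup (f := id) hA).ssubset_of_mem_notMem hx hxA

theorem card_filter_notMem_le_one (hF : SupClosed (F : Set (Finset ℕ))) (hheight : height F ≤ 2)
    (hx : x ∈ F.sup id) : #{A ∈ F | x ∉ A} ≤ 1 := by
  have hanti := isAntichain_of_height_le_one
    (Nat.le_of_lt_succ ((height_filter_notMem_lt hF hx).trans_le hheight))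
  exact card_le_one_iff_subsingleton.mpr
    (subsingleton_of_supClosed_of_isAntichain (supClosed_filter_notMem hF x) hanti)

theorem card_sub_one_le_card_filter_mem (hF : SupClosed (F : Set (Finset ℕ)))
    (hheight : height F ≤ 2) (hx : x ∈ F.sup id) : #F - 1 ≤ #{A ∈ F | x ∈ A} := by
  have hnotMem := card_filter_notMem_le_one hF hheight hx
  have hsplit := card_filter_add_card_filter_not (s := F) (x ∈ ·)
  omega

end Frequency

/-- If `H(F) = 2`, then every element of `{1, …, n}` belongs to at
least `m − 1` of the sets of `F`, and some element of `{1, …, n}` belongs to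
more than `m/2` of the sets of `F`. -/
theorem height_eq_two_frequencies (n m : ℕ) (F : Finset (Finset ℕ))
    (hF : IsUC F n m) (h : height F = 2) :
    (∀ x ∈ Finset.Icc 1 n, m - 1 ≤ (F.filter fun A => x ∈ A).card) ∧
      ∃ x ∈ Finset.Icc 1 n, 2 * (F.filter fun A => x ∈ A).card > m := by
  obtain ⟨-, rfl, hnonempty, hsup, hunion⟩ := hF
  have hclosed : SupClosed (F : Set (Finset ℕ)) := fun A hA B hB => hunion A hA B hB
  have hfreq : ∀ x ∈ Icc 1 n, #F - 1 ≤ #{A ∈ F | x ∈ A} := fun x hx =>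
    card_sub_one_le_card_filter_mem hclosed h.le (hsup ▸ hx)
  refine ⟨hfreq, ?_⟩
  obtain ⟨A, hA, B, hB, hAB⟩ := exists_ssubset_of_one_lt_height (h ▸ one_lt_two)
  obtain ⟨x, hxA⟩ := hnonempty A hA
  have hx : x ∈ Icc 1 n := hsup ▸ mem_sup.mpr ⟨A, hA, hxA⟩
  have hone_lt : 1 < #{A ∈ F | x ∈ A} := one_lt_card.mpr
    ⟨A, mem_filter.mpr ⟨hA, hxA⟩, B, mem_filter.mpr ⟨hB, hAB.subset hxA⟩, hAB.ne⟩
  have hfreq_x := hfreq x hx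
  exact ⟨x, hx, by omega⟩
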